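/- arXiv:math/0512195 — 6 statements merged into one kernel-verified Lean document; each statement's English description precedes it below -/
import Mathlib

section
/- For every finite Borel measure μ on E = [0,∞] and every r ≥ 0, the height of the erased measure satisfies H^μ_r = sup{ x ∈ E : μ([x,∞]) > r } (with sup ∅ = 0). -/
/-!
Write `c` for the cut point, `k` for the erased measure and `m = μ(E) - r` (truncated). Since `μ` is
finite, `μ([x,∞]) > r` means `μ([0,x)) < m`.

* If `m ≤ μ([0,y])`, then `c ≤ y`, so `k` has no mass above `y`. Hence every `y` strictly below
  a support point of `k` satisfies `μ([0,y)) ≤ μ([0,y]) < m`, which bounds the height by the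
  supremum.
* If `μ([0,x)) < m`, then `x ≤ c`. Were `k([x,∞])` zero, the restriction part of `k` would give
  `μ([x,c)) = 0` and the atom at `c` would give `m ≤ μ([0,c)) = μ([0,x))`, a contradiction. So
  `k([x,∞]) > 0`, and since a set of positive measure meets the support, the height is at least `x`.

Neither part needs a separate treatment of the case `r ≥ μ(E)`, nor the distribution function of `k`.
-/

open MeasureTheory Set Filter Topology ENNReal

noncomputable section

/-- `mH ν` is the supremum of the closed support of a Borel measure `ν` on `E = [0,∞]`
(a point is in the support iff every open neighbourhood has positive measure),
with the convention `sSup ∅ = 0`. -/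
def mH (ν : Measure ℝ≥0∞) : ℝ≥0∞ :=
  sSup {x : ℝ≥0∞ | ∀ U : Set ℝ≥0∞, IsOpen U → x ∈ U → 0 < ν U}

/-- The point at which the erased measure `k_a ν` is cut. -/
def eraseCut (ν : Measure ℝ≥0∞) (a : ℝ≥0∞) : ℝ≥0∞ :=
  sInf {s : ℝ≥0∞ | ν Set.univ - a ≤ ν (Set.Iic s)}

/-- The erased measure `k_a ν` : the measure `ν` erased by mass `a` backward from the top.
For a finite measure `ν` it is the unique finite measure satisfying
`eraseMass a ν (Set.Iic s) = min (ν (Set.Iic s)) (ν Set.univ - a)` for all `s`;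
in particular it is `0` as soon as `a ≥ ν Set.univ`. -/
def eraseMass (a : ℝ≥0∞) (ν : Measure ℝ≥0∞) : Measure ℝ≥0∞ :=
  ν.restrict (Set.Iio (eraseCut ν a)) +
    (ν Set.univ - a - ν (Set.Iio (eraseCut ν a))) • Measure.dirac (eraseCut ν a)

/-- `Hr ν r = H^ν_r = H^{k_r ν}`, the height of the measure `ν` erased by mass `r`. -/
def Hr (ν : Measure ℝ≥0∞) (r : ℝ≥0∞) : ℝ≥0∞ := mH (eraseMass r ν)

lemma lt_measure_Ici_iff (μ : Measure ℝ≥0∞) [IsFiniteMeasure μ] (a x : ℝ≥0∞) :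
    a < μ (Set.Ici x) ↔ μ (Set.Iio x) < μ Set.univ - a := by
  have h : μ Set.univ = μ (Set.Iio x) + μ (Set.Ici x) := by
    rw [← Set.compl_Iio, measure_add_measure_compl measurableSet_Iio]
  rw [lt_tsub_iff_right, h, ENNReal.add_lt_add_iff_left (measure_ne_top _ _)]

/-- A set of positive measure meets the closed support: otherwise it would be locally null,
hence null because `[0,∞]` is hereditarily Lindelöf. -/
lemma le_mH_of_measure_Ici_ne_zero {ν : Measure ℝ≥0∞} {x : ℝ≥0∞} (h : ν (Set.Ici x) ≠ 0) :
    x ≤ mH ν := by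
  by_contra hx
  refine h (measure_null_of_locally_null _ fun y hy => ?_)
  have hy' : ¬ ∀ U : Set ℝ≥0∞, IsOpen U → y ∈ U → 0 < ν U := fun hs =>
    hx (le_trans hy (le_sSup hs))
  push Not at hy'
  obtain ⟨U, hU, hyU, hU0⟩ := hy'
  exact ⟨U, mem_nhdsWithin_of_mem_nhds (hU.mem_nhds hyU), le_antisymm hU0 bot_le⟩

lemma eraseMass_Ioi_eq_zero {μ : Measure ℝ≥0∞} {a y : ℝ≥0∞}
    (h : μ Set.univ - a ≤ μ (Set.Iic y)) : eraseMass a μ (Set.Ioi y) = 0 := by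
  have hc : eraseCut μ a ≤ y := sInf_le h
  have he : Set.Ioi y ∩ Set.Iio (eraseCut μ a) = ∅ := by
    ext z
    simpa using fun hz : y < z => hc.trans hz.le
  simp [eraseMass, Measure.restrict_apply measurableSet_Ioi, he, hc]

lemma eraseMass_Ici_ne_zero {μ : Measure ℝ≥0∞} {a x : ℝ≥0∞}
    (h : μ (Set.Iio x) < μ Set.univ - a) : eraseMass a μ (Set.Ici x) ≠ 0 := by
  intro h0
  have hc : x ≤ eraseCut μ a := by
    refine le_sInf fun s hs => ?_
    by_contra! hsx
    exact absurd (hs.trans (measure_mono (Set.Iic_subset_Iio.2 hsx))) h.not_ge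
  simp only [eraseMass, Measure.add_apply, Measure.smul_apply, smul_eq_mul, add_eq_zero,
    Measure.restrict_apply measurableSet_Ici, Measure.dirac_apply' _ measurableSet_Ici,
    Set.indicator_of_mem (Set.mem_Ici.2 hc), Pi.one_apply, mul_one, tsub_eq_zero_iff_le] at h0
  obtain ⟨h1, h2⟩ := h0
  rw [Set.Ici_inter_Iio] at h1
  have h3 : μ (Set.Iio (eraseCut μ a)) ≤ μ (Set.Iio x) := by
    rw [← Set.Iio_union_Ico_eq_Iio hc]
    exact (measure_union_le _ _).trans (by rw [h1, add_zero])
  exact absurd (h2.trans h3) h.not_ge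

/-- For every finite Borel measure `μ` on `E = [0,∞]` and every `r ≥ 0`,
`H^μ_r = sup {x ∈ E | μ([x,∞]) > r}` (with `sup ∅ = 0`). -/
theorem erased_height_eq_sSup (μ : Measure ℝ≥0∞) [IsFiniteMeasure μ] (r : ℝ) (hr : 0 ≤ r) :
    Hr μ (ENNReal.ofReal r) = sSup {x : ℝ≥0∞ | ENNReal.ofReal r < μ (Set.Ici x)} := by
  simp only [lt_measure_Ici_iff]
  refine le_antisymm (sSup_le fun x hx => le_of_forall_lt fun y hy => ?_)
    (sSup_le fun x hx => le_mH_of_measure_Ici_ne_zero (eraseMass_Ici_ne_zero hx))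
  obtain ⟨z, hyz, hzx⟩ := exists_between hy
  refine hyz.trans_le (le_sSup ?_)
  refine (measure_mono Set.Iio_subset_Iic_self).trans_lt (not_le.1 fun hm => ?_)
  exact (hx _ isOpen_Ioi hzx).ne' (eraseMass_Ioi_eq_zero hm)
end
end

section
/- For every finite Borel measure μ on E = [0,∞] and every bounded Borel measurable function h : E → ℝ, one has ∫₀^{⟨μ,1⟩} h(H^μ_r) dr = ∫_E h dμ. -/
/-!
For `0 < r < ⟨μ,1⟩`, the height `H^μ_r` is the cut point `eraseCut μ r`, that is, the generalized
inverse of the distribution function `s ↦ μ [0,s]` taken at the level `⟨μ,1⟩ - r`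
(`Hr_eq_eraseCut`). By right continuity, `eraseCut μ r ≤ s` if and only if
`⟨μ,1⟩ - r ≤ μ [0,s]` (`le_measure_Iic_iff`), and the set of such `r` in `(0, ⟨μ,1⟩)` has Lebesgue
measure `μ [0,s]`. Hence the cut point pushes Lebesgue measure on `(0, ⟨μ,1⟩)` forward to `μ`
(`map_eraseCut`), and the theorem is the change of variables formula.
-/

open MeasureTheory Set Filter Topology ENNReal

noncomputable section

/-- Right continuity of the distribution function: the infimum defining `eraseCut` is attained. -/
lemma le_measure_Iic_iff (μ : Measure ℝ≥0∞) [IsFiniteMeasure μ] (a s : ℝ≥0∞) :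
    eraseCut μ a ≤ s ↔ μ univ - a ≤ μ (Iic s) := by
  constructor
  · intro hs
    rcases eq_or_ne s ⊤ with rfl | hs'
    · simp
    -- at `s < ∞`, `Iic s` is the decreasing intersection of the `Iic t`, `t ↓ s`
    obtain ⟨u, hu, hsu, hlim⟩ := exists_seq_strictAnti_tendsto' (lt_top_iff_ne_top.mpr hs')
    have hI : Iic s = ⋂ n, Iic (u n) := by
      ext x
      simp only [mem_Iic, mem_iInter]
      exact ⟨fun h n => h.trans (hsu n).1.le, fun h => ge_of_tendsto' hlim h⟩
    rw [hI, Antitone.measure_iInter (fun i j hij => Iic_subset_Iic.mpr (hu.antitone hij))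
      (fun _ => measurableSet_Iic.nullMeasurableSet) ⟨0, measure_ne_top _ _⟩]
    refine le_iInf fun n => ?_
    obtain ⟨t, ht, htu⟩ := sInf_lt_iff.mp (lt_of_le_of_lt hs (hsu n).1)
    exact le_trans ht (measure_mono (Iic_subset_Iic.mpr htu.le))
  · exact fun h => sInf_le h

lemma antitone_eraseCut (μ : Measure ℝ≥0∞) : Antitone (eraseCut μ) := fun _ _ hab =>
  sInf_le_sInf fun _ hs => le_trans (tsub_le_tsub_left hab _) hs

/-- As long as less than the total mass is erased, the erased measure charges every
neighbourhood of the cut point, and nothing above it. -/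
lemma Hr_eq_eraseCut (μ : Measure ℝ≥0∞) [IsFiniteMeasure μ] {a : ℝ≥0∞} (ha : a < μ univ) :
    Hr μ a = eraseCut μ a := by
  have hm : 0 < μ univ - a := tsub_pos_of_lt ha
  set c := eraseCut μ a with hc
  refine le_antisymm (sSup_le fun x hx => ?_) (le_sSup fun U hU hcU => ?_)
  · by_contra! hcx
    refine (hx (Ioi c) isOpen_Ioi hcx).ne' ?_
    have h1 : Ioi c ∩ Iio c = ∅ := by ext y; simpa using fun h => le_of_lt h
    simp [eraseMass, ← hc, Measure.restrict_apply measurableSet_Ioi, h1]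
  · rcases lt_or_ge (μ (Iio c)) (μ univ - a) with hlt | hge
    · -- a positive multiple of the Dirac mass at `c` remains
      have h2 : 0 < μ univ - a - μ (Iio c) := tsub_pos_of_lt hlt
      simp [eraseMass, ← hc, Measure.dirac_apply' _ hU.measurableSet, hcU,
        -tsub_pos_iff_lt, h2]
    · -- no atom remains at `c`, but `μ` charges every interval `(l, c)`
      have hc0 : 0 < c := by
        refine pos_iff_ne_zero.mpr fun h0 => ?_
        rw [h0] at hge
        exact hm.not_ge (hge.trans (by simp))
      obtain ⟨l, hl, hlU⟩ := exists_Ioc_subset_of_mem_nhds (hU.mem_nhds hcU) ⟨0, hc0⟩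
      have hlm : μ (Iic l) < μ (Iio c) := by
        refine lt_of_lt_of_le ?_ hge
        by_contra! h
        exact absurd ((le_measure_Iic_iff μ a l).mpr h) (not_le.mpr hl)
      have hpos : 0 < μ (Ioo l c) := by
        refine pos_iff_ne_zero.mpr fun h0 => hlm.not_ge ?_
        calc μ (Iio c) ≤ μ (Iic l ∪ Ioo l c) := by
              refine measure_mono fun y hy => ?_
              rcases le_or_gt y l with h | h
              · exact Or.inl h
              · exact Or.inr ⟨h, hy⟩
          _ ≤ μ (Iic l) + μ (Ioo l c) := measure_union_le _ _
          _ = μ (Iic l) := by rw [h0, add_zero]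
      calc 0 < μ (Ioo l c) := hpos
        _ ≤ μ (U ∩ Iio c) := measure_mono fun y hy => ⟨hlU ⟨hy.1, hy.2.le⟩, hy.2⟩
        _ = μ.restrict (Iio c) U := (Measure.restrict_apply hU.measurableSet).symm
        _ ≤ eraseMass a μ U := by simp [eraseMass, ← hc]

/-- The cut point is a quantile transform: it pushes Lebesgue measure on `(0, ⟨μ,1⟩)` to `μ`. -/
lemma map_eraseCut (μ : Measure ℝ≥0∞) [IsFiniteMeasure μ] :
    (volume.restrict (Ioo (0:ℝ) (μ univ).toReal)).map
      (fun r => eraseCut μ (ENNReal.ofReal r)) = μ := by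
  have hmeas : Measurable fun r : ℝ => eraseCut μ (ENNReal.ofReal r) :=
    (antitone_eraseCut μ).measurable.comp ENNReal.measurable_ofReal
  have hM : μ univ ≠ ⊤ := measure_ne_top _ _
  refine Measure.ext_of_Iic _ _ fun s => ?_
  rw [Measure.map_apply hmeas measurableSet_Iic,
    Measure.restrict_apply (hmeas measurableSet_Iic)]
  have hF : μ (Iic s) ≠ ⊤ := measure_ne_top _ _
  have hle : (μ (Iic s)).toReal ≤ (μ univ).toReal :=
    ENNReal.toReal_mono hM (measure_mono (subset_univ _))
  have hset : (fun r : ℝ => eraseCut μ (ENNReal.ofReal r)) ⁻¹' Iic s ∩ Ioo 0 (μ univ).toReal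
      = Ico ((μ univ).toReal - (μ (Iic s)).toReal) (μ univ).toReal ∩ Ioi 0 := by
    ext r
    simp only [mem_inter_iff, mem_preimage, mem_Iic, mem_Ioo, mem_Ico, mem_Ioi,
      le_measure_Iic_iff]
    have key : 0 < r → (μ univ - ENNReal.ofReal r ≤ μ (Iic s) ↔
        (μ univ).toReal - (μ (Iic s)).toReal ≤ r) := by
      intro hr
      rw [tsub_le_iff_right, ← ENNReal.toReal_le_toReal hM (by simp [hF]),
        ENNReal.toReal_add hF (by simp), ENNReal.toReal_ofReal hr.le, sub_le_iff_le_add']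
    constructor
    · rintro ⟨h1, h2, h3⟩
      exact ⟨⟨(key h2).mp h1, h3⟩, h2⟩
    · rintro ⟨⟨h1, h3⟩, h2⟩
      exact ⟨(key h2).mpr h1, h2, h3⟩
  -- the constraint `0 < r` removes at most the point `0`
  have hae : (Ico ((μ univ).toReal - (μ (Iic s)).toReal) (μ univ).toReal ∩ Ioi 0 : Set ℝ)
      =ᵐ[volume] Ico ((μ univ).toReal - (μ (Iic s)).toReal) (μ univ).toReal := by
    filter_upwards [Measure.ae_ne volume (0:ℝ)] with r hr
    refine propext ⟨fun h => h.1, fun h => ⟨h, ?_⟩⟩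
    exact lt_of_le_of_ne ((sub_nonneg.mpr hle).trans h.1) hr.symm
  rw [hset, measure_congr hae, Real.volume_Ico, _root_.sub_sub_cancel, ENNReal.ofReal_toReal hF]

/-- For every finite Borel measure `μ` on `E = [0,∞]` and every bounded Borel
measurable `h : E → ℝ`, `∫₀^{⟨μ,1⟩} h(H^μ_r) dr = ∫_E h dμ`. -/
theorem integral_height_eq (μ : Measure ℝ≥0∞) [IsFiniteMeasure μ]
    (h : ℝ≥0∞ → ℝ) (hm : Measurable h) (hb : ∃ C, ∀ x, |h x| ≤ C) :
    ∫ r in (0:ℝ)..(μ Set.univ).toReal, h (Hr μ (ENNReal.ofReal r)) = ∫ x, h x ∂μ := by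
  have hmeas : Measurable fun r : ℝ => eraseCut μ (ENNReal.ofReal r) :=
    (antitone_eraseCut μ).measurable.comp ENNReal.measurable_ofReal
  rw [intervalIntegral.integral_of_le ENNReal.toReal_nonneg, integral_Ioc_eq_integral_Ioo]
  conv_rhs => rw [← map_eraseCut μ]
  rw [integral_map hmeas.aemeasurable hm.aestronglyMeasurable]
  refine setIntegral_congr_fun measurableSet_Ioo fun r hr => ?_
  have hr' : ENNReal.ofReal r < μ univ :=
    (ENNReal.ofReal_lt_iff_lt_toReal hr.1.le (measure_ne_top _ _)).mpr hr.2
  simp only [Hr_eq_eraseCut μ hr']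
end
end

section
/- If μ and ν are finite Borel measures on E = [0,∞] with ⟨μ,1⟩ = ⟨ν,1⟩ and H^μ_r = H^ν_r for all r ≥ 0, then μ = ν. -/
/-! A finite measure on `[0,∞]` is determined by its distribution function `s ↦ ν (Iic s)`, and
the heights `Hr ν r` recover that function. The erased measure has mass at least `ν univ - r`,
sits in `Iic (eraseCut ν r)`, and puts less than `ν univ - r` on `Iic x` for every `x` under the
cut, so its height is exactly `eraseCut ν r` (`Hr_eq_eraseCut`). The cut is the generalized
inverse of the distribution function: `eraseCut ν r ≤ s ↔ ν univ - r ≤ ν (Iic s)`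
(`eraseCut_le_iff`, by right-continuity). Taking `r = μ univ - μ (Iic s)` in the equality of the
cuts of `μ` and `ν` gives `μ (Iic s) ≤ ν (Iic s)`, and the roles are symmetric. -/

open MeasureTheory Set Filter Topology ENNReal

noncomputable section

/-- The cut is the generalized inverse of the distribution function; the forward direction is the
right-continuity of the latter, which needs finiteness of `ν`. -/
lemma eraseCut_le_iff (ν : Measure ℝ≥0∞) [IsFiniteMeasure ν] (a s : ℝ≥0∞) :
    eraseCut ν a ≤ s ↔ ν Set.univ - a ≤ ν (Set.Iic s) := by
  refine ⟨fun h => ?_, fun h => sInf_le h⟩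
  rcases eq_or_ne s ⊤ with rfl | hs
  · simp
  have hmem : ∀ t > s, ν Set.univ - a ≤ ν (Set.Iic t) := fun t ht => by
    obtain ⟨u, hu, hut⟩ := sInf_lt_iff.1 (h.trans_lt ht)
    exact le_trans hu (measure_mono (Set.Iic_subset_Iic.2 hut.le))
  have hInter : ⋂ t > s, Set.Iic t = Set.Iic s := by
    ext x
    simp only [Set.mem_iInter, Set.mem_Iic]
    exact ⟨fun hx => le_of_forall_gt_imp_ge_of_dense hx, fun hx t ht => hx.trans ht.le⟩
  have hlim : Tendsto (ν ∘ Set.Iic) (𝓝[Set.Ioi s] s) (𝓝 (ν (Set.Iic s))) := by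
    have h := tendsto_measure_biInter_gt (μ := ν) (s := Set.Iic) (a := s)
      (fun _ _ => measurableSet_Iic.nullMeasurableSet)
      (fun _ _ _ hij => Set.Iic_subset_Iic.2 hij)
      ⟨⊤, lt_top_iff_ne_top.2 hs, measure_ne_top _ _⟩
    rwa [hInter] at h
  have : (𝓝[Set.Ioi s] s).NeBot := nhdsGT_neBot_of_exists_gt ⟨⊤, lt_top_iff_ne_top.2 hs⟩
  exact ge_of_tendsto hlim (eventually_mem_nhdsWithin.mono hmem)

/-- The height of the erased measure is the cut point. For `r ≥ ν univ` both sides are `0`. -/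
lemma Hr_eq_eraseCut_s4 (ν : Measure ℝ≥0∞) [IsFiniteMeasure ν] (r : ℝ≥0∞) :
    Hr ν r = eraseCut ν r := by
  set c := eraseCut ν r with hc
  have hsupp : {x : ℝ≥0∞ | ∀ U : Set ℝ≥0∞, IsOpen U → x ∈ U → 0 < eraseMass r ν U} =
      (eraseMass r ν).support := by
    ext x
    rw [Measure.mem_support_iff_forall]
    refine ⟨fun h U hU => ?_, fun h U hU hx => h U (hU.mem_nhds hx)⟩
    obtain ⟨V, hVU, hV, hx⟩ := mem_nhds_iff.1 hU
    exact (h V hV hx).trans_le (measure_mono hVU)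
  rw [Hr, mH, hsupp]
  apply le_antisymm
  · refine sSup_le fun x hx => not_lt.1 fun hcx => ?_
    have h0 := Measure.mem_support_iff_forall x |>.1 hx (Set.Ioi c) (Ioi_mem_nhds hcx)
    have hdisj : Set.Ioi c ∩ Set.Iio c = ∅ := by
      ext y; simpa using fun h : c < y => h.le
    simp [eraseMass, ← hc, Measure.restrict_apply measurableSet_Ioi, hdisj] at h0
  · refine le_of_forall_lt fun x hx => ?_
    have hlow : eraseMass r ν (Set.Iic x) < ν Set.univ - r := by
      have h1 : ν (Set.Iic x) < ν Set.univ - r :=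
        not_le.1 fun h => hx.not_ge ((eraseCut_le_iff ν r x).2 h)
      have h2 : eraseMass r ν (Set.Iic x) = ν (Set.Iic x ∩ Set.Iio c) := by
        simp [eraseMass, ← hc, Measure.restrict_apply measurableSet_Iic, hx]
      exact h2 ▸ (measure_mono Set.inter_subset_left).trans_lt h1
    have htot : ν Set.univ - r ≤ eraseMass r ν Set.univ := by
      simp [eraseMass, ← hc, le_add_tsub]
    have hpos : eraseMass r ν (Set.Ioi x) ≠ 0 := fun h0 => by
      have h := measure_union_le (μ := eraseMass r ν) (Set.Iic x) (Set.Ioi x)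
      rw [Set.Iic_union_Ioi, h0, add_zero] at h
      exact (htot.trans h).not_gt hlow
    obtain ⟨y, hxy, hy⟩ := Measure.nonempty_inter_support_of_pos (pos_iff_ne_zero.2 hpos)
    exact lt_of_lt_of_le hxy (le_sSup hy)

/-- One inequality between the distribution functions, obtained by erasing exactly the mass
lying above `s`. -/
lemma measure_Iic_le_of_Hr_eq (μ ν : Measure ℝ≥0∞) [IsFiniteMeasure μ] [IsFiniteMeasure ν]
    (hmass : μ Set.univ = ν Set.univ)
    (hH : ∀ r : ℝ, 0 ≤ r → Hr μ (ENNReal.ofReal r) = Hr ν (ENNReal.ofReal r)) (s : ℝ≥0∞) :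
    μ (Set.Iic s) ≤ ν (Set.Iic s) := by
  set a := μ Set.univ - μ (Set.Iic s) with ha
  have hsub : μ Set.univ - a = μ (Set.Iic s) :=
    ENNReal.sub_sub_cancel (measure_ne_top _ _) (measure_mono (Set.subset_univ _))
  have hcut : eraseCut μ a = eraseCut ν a := by
    have h := hH a.toReal ENNReal.toReal_nonneg
    rwa [ENNReal.ofReal_toReal (ENNReal.sub_ne_top (measure_ne_top _ _)), Hr_eq_eraseCut_s4,
      Hr_eq_eraseCut_s4] at h
  have h := (eraseCut_le_iff μ a s).2 hsub.le
  rw [hcut, eraseCut_le_iff, ← hmass, hsub] at h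
  exact h

/-- If `μ` and `ν` are finite Borel measures on `E = [0,∞]` with the same total
mass and `H^μ_r = H^ν_r` for all `r ≥ 0`, then `μ = ν`. -/
theorem measure_eq_of_mass_eq_of_height_eq
    (μ ν : Measure ℝ≥0∞) [IsFiniteMeasure μ] [IsFiniteMeasure ν]
    (hmass : μ Set.univ = ν Set.univ)
    (hH : ∀ r : ℝ, 0 ≤ r → Hr μ (ENNReal.ofReal r) = Hr ν (ENNReal.ofReal r)) :
    μ = ν :=
  Measure.ext_of_Iic μ ν fun s => le_antisymm (measure_Iic_le_of_Hr_eq μ ν hmass hH s)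
    (measure_Iic_le_of_Hr_eq ν μ hmass.symm (fun r hr => (hH r hr).symm) s)
end
end

section
/- Suppose in addition that G is continuously differentiable on [0,∞). Then for all finite Borel measures μ, ν on E = [0,∞], ∫₀^∞ |G(H^μ_r) − G(H^ν_r)| dr ≤ ∫₀^∞ G'(v) · |μ((v,∞]) − ν((v,∞])| dv. -/
/-!
The height of the erased measure is its cut point, and both are governed by the tail mass: by right
continuity of `s ↦ ν [0,s]`, one has `v < H^ν_r` if and only if `r < ν (v,∞]` (`lt_Hr_iff`). So
`r ↦ H^ν_r` is the generalised inverse of the tail function of `ν`. By the fundamental theorem of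
calculus (`ofReal_sub_le`), `|G(H^μ_r) - G(H^ν_r)|` is at most the integral of `G'` over those `v`
which lie below exactly one of the two heights, i.e. those `v` for which `r` lies below exactly one
of the two tail masses at `v`. Tonelli's theorem then gives the claim, since for fixed `v` such `r`
form an interval of length at most `|μ (v,∞] - ν (v,∞]|`.
-/

open MeasureTheory Set Filter Topology ENNReal

noncomputable section

/-- Right continuity of `s ↦ ν [0,s]`: the infimum defining the cut is attained. -/
lemma le_measure_Iic_eraseCut (ν : Measure ℝ≥0∞) [IsFiniteMeasure ν] (a : ℝ≥0∞) :
    ν univ - a ≤ ν (Iic (eraseCut ν a)) := by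
  set c := eraseCut ν a with hc
  rcases eq_or_ne c ⊤ with h | h
  · rw [h, Iic_top]; exact tsub_le_self
  obtain ⟨u, hu, hlt, hlim⟩ := exists_seq_strictAnti_tendsto' (lt_top_iff_ne_top.2 h)
  have hI : Iic c = ⋂ n, Iic (u n) := by
    ext x
    simp only [mem_Iic, mem_iInter]
    exact ⟨fun hx n => hx.trans (hlt n).1.le, fun hx => ge_of_tendsto' hlim hx⟩
  rw [hI]
  have ht := tendsto_measure_iInter_atTop (μ := ν) (s := fun n => Iic (u n))
    (fun n => measurableSet_Iic.nullMeasurableSet)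
    (fun m n hmn => Iic_subset_Iic.2 (hu.antitone hmn)) ⟨0, measure_ne_top _ _⟩
  refine ge_of_tendsto' ht fun n => ?_
  obtain ⟨s, hs, hsu⟩ := sInf_lt_iff.1 (hlt n).1
  exact le_trans hs (measure_mono (Iic_subset_Iic.2 hsu.le))

lemma lt_eraseCut_iff (ν : Measure ℝ≥0∞) [IsFiniteMeasure ν] (a v : ℝ≥0∞) :
    v < eraseCut ν a ↔ ν (Iic v) < ν univ - a := by
  constructor
  · intro h
    by_contra! h'
    exact absurd (sInf_le h' : eraseCut ν a ≤ v) (not_le.2 h)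
  · intro h
    by_contra! h'
    exact absurd ((le_measure_Iic_eraseCut ν a).trans (measure_mono (Iic_subset_Iic.2 h')))
      (not_le.2 h)

/-- The height lies above `v` exactly when there is mass above `v`; the complement of the support
is null because `[0,∞]` is second countable. -/
lemma lt_mH_iff (κ : Measure ℝ≥0∞) (v : ℝ≥0∞) : v < mH κ ↔ 0 < κ (Ioi v) := by
  constructor
  · intro h
    obtain ⟨x, hx, hvx⟩ := lt_sSup_iff.1 h
    exact hx _ isOpen_Ioi hvx
  · intro h
    by_contra! h'
    refine h.ne' (measure_null_of_locally_null _ fun x hx => ?_)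
    have hx' : ¬ ∀ U : Set ℝ≥0∞, IsOpen U → x ∈ U → 0 < κ U := fun hU =>
      absurd (le_trans (show x ≤ mH κ from le_sSup hU) h') (not_le.2 hx)
    push Not at hx'
    obtain ⟨U, hU, hxU, hU0⟩ := hx'
    exact ⟨U, mem_nhdsWithin_of_mem_nhds (hU.mem_nhds hxU), le_antisymm hU0 bot_le⟩

lemma eraseMass_Ioi_pos_iff (ν : Measure ℝ≥0∞) [IsFiniteMeasure ν] (a v : ℝ≥0∞) :
    0 < eraseMass a ν (Ioi v) ↔ v < eraseCut ν a := by
  have key := lt_eraseCut_iff ν a v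
  unfold eraseMass
  set c := eraseCut ν a
  rw [Measure.add_apply, Measure.restrict_apply measurableSet_Ioi, Measure.smul_apply,
    Measure.dirac_apply' _ measurableSet_Ioi]
  constructor
  · intro h
    by_contra! h'
    have h1 : Ioi v ∩ Iio c = ∅ := by
      ext x
      simp only [mem_inter_iff, mem_Ioi, mem_Iio, mem_empty_iff_false, iff_false, not_and, not_lt]
      exact fun hx => h'.trans hx.le
    simp [h1, h'] at h
  · intro h
    have h2 := key.1 h
    by_contra! h0
    simp only [nonpos_iff_eq_zero, add_eq_zero, smul_eq_mul, mul_eq_zero] at h0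
    obtain ⟨h3, h4⟩ := h0
    have h5 : ν univ - a ≤ ν (Iio c) := by
      rcases h4 with h4 | h4
      · exact tsub_eq_zero_iff_le.1 h4
      · simp [h] at h4
    have h6 : ν (Iio c) ≤ ν (Iic v) := by
      calc ν (Iio c) ≤ ν (Iic v ∪ (Ioi v ∩ Iio c)) := by
            refine measure_mono fun x hx => ?_
            rcases le_or_gt x v with h | h
            · exact Or.inl h
            · exact Or.inr ⟨h, hx⟩
        _ ≤ ν (Iic v) + ν (Ioi v ∩ Iio c) := measure_union_le _ _
        _ = ν (Iic v) := by rw [h3, add_zero]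
    exact absurd (h5.trans h6) (not_le.2 h2)

/-- `r ↦ H^ν_r` is the generalised inverse of the tail function `v ↦ ν (v,∞]`. -/
lemma lt_Hr_iff (ν : Measure ℝ≥0∞) [IsFiniteMeasure ν] (r v : ℝ≥0∞) :
    v < Hr ν r ↔ r < ν (Ioi v) := by
  have h : ν univ = ν (Ioi v) + ν (Iic v) := by
    rw [← compl_Iic, add_comm, measure_add_measure_compl measurableSet_Iic]
  rw [Hr, lt_mH_iff, eraseMass_Ioi_pos_iff, lt_eraseCut_iff, lt_tsub_iff_left, h,
    ENNReal.add_lt_add_iff_right (measure_ne_top _ _)]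

/-- The part of the fundamental theorem of calculus that is needed, including the endpoint `∞`. -/
lemma ofReal_sub_le (G : ℝ≥0∞ → ℝ) (hGc : Continuous G) (hGm : StrictMono G)
    (g : ℝ → ℝ) (hgG : ∀ t : ℝ, g t = G (ENNReal.ofReal t))
    (hgC1 : ContDiffOn ℝ 1 g (Set.Ici 0)) (a b : ℝ≥0∞) (hab : a ≤ b) :
    ENNReal.ofReal (G b - G a) ≤
      ∫⁻ v in Ioi (0:ℝ) ∩ {v | a ≤ ENNReal.ofReal v ∧ ENNReal.ofReal v < b},
        ENNReal.ofReal (deriv g v) := by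
  have hgm : Monotone g := fun x y hxy => by
    rw [hgG, hgG]; exact hGm.monotone (ENNReal.ofReal_le_ofReal hxy)
  have hgc : Continuous g := by
    rw [funext hgG]; exact hGc.comp ENNReal.continuous_ofReal
  have hder : ∀ x : ℝ, 0 < x → HasDerivAt g (deriv g x) x := fun x hx =>
    ((hgC1.differentiableOn (by norm_num)).differentiableAt (Ici_mem_nhds hx)).hasDerivAt
  have hnn : ∀ x, 0 ≤ deriv g x := fun x => hgm.deriv_nonneg
  have fin : ∀ x y : ℝ, 0 ≤ x → x ≤ y → ENNReal.ofReal (g y - g x) =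
      ∫⁻ v in Ioo x y, ENNReal.ofReal (deriv g v) := by
    intro x y hx hxy
    have hd : ∀ z ∈ Ioo x y, HasDerivAt g (deriv g z) z := fun z hz =>
      hder z (hx.trans_lt hz.1)
    have hint : IntegrableOn (deriv g) (Ioc x y) :=
      intervalIntegral.integrableOn_deriv_of_nonneg hgc.continuousOn hd (fun z _ => hnn z)
    rw [← intervalIntegral.integral_eq_sub_of_hasDerivAt_of_le hxy hgc.continuousOn hd
      ((intervalIntegrable_iff_integrableOn_Ioc_of_le hxy).2 hint),
      intervalIntegral.integral_of_le hxy,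
      ofReal_integral_eq_lintegral_ofReal hint (Eventually.of_forall hnn),
      setLIntegral_congr Ioo_ae_eq_Ioc]
  have fin' : ∀ x y : ℝ, 0 ≤ x → x ≤ y → ENNReal.ofReal y ≤ b → a = ENNReal.ofReal x →
      ENNReal.ofReal (g y - g x) ≤
      ∫⁻ v in Ioi (0:ℝ) ∩ {v | a ≤ ENNReal.ofReal v ∧ ENNReal.ofReal v < b},
        ENNReal.ofReal (deriv g v) := by
    intro x y hx hxy hyb hax
    rw [fin x y hx hxy]
    refine lintegral_mono_set fun v hv => ?_
    have hv0 : 0 < v := hx.trans_lt hv.1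
    exact ⟨hv0, hax ▸ ENNReal.ofReal_le_ofReal hv.1.le,
      ((ENNReal.ofReal_lt_ofReal_iff (hv0.trans hv.2)).2 hv.2).trans_le hyb⟩
  rcases eq_or_ne a ⊤ with ha | ha
  · have hb : b = ⊤ := top_le_iff.1 (ha ▸ hab)
    simp [ha, hb]
  have hax : a = ENNReal.ofReal a.toReal := (ENNReal.ofReal_toReal ha).symm
  have hGa : G a = g a.toReal := by rw [hgG, ← hax]
  rcases eq_or_ne b ⊤ with hb | hb
  · have hlim : Tendsto (fun y : ℝ => ENNReal.ofReal (g y - g a.toReal)) atTop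
        (𝓝 (ENNReal.ofReal (G b - G a))) := by
      rw [hGa, hb]
      refine (ENNReal.continuous_ofReal.tendsto _).comp (Tendsto.sub_const ?_ _)
      rw [funext hgG]
      exact (hGc.tendsto ⊤).comp ENNReal.tendsto_ofReal_atTop
    refine le_of_tendsto hlim ?_
    filter_upwards [eventually_ge_atTop a.toReal] with y hy
    exact fin' _ y ENNReal.toReal_nonneg hy (hb ▸ le_top) hax
  · have hbx : b = ENNReal.ofReal b.toReal := (ENNReal.ofReal_toReal hb).symm
    have hGb : G b = g b.toReal := by rw [hgG, ← hbx]
    rw [hGa, hGb]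
    exact fin' _ _ ENNReal.toReal_nonneg (ENNReal.toReal_mono hb hab) hbx.symm.le hax

lemma measurable_tail (μ : Measure ℝ≥0∞) [IsFiniteMeasure μ] :
    Measurable fun v : ℝ => (μ (Ioi (ENNReal.ofReal v))).toReal := by
  refine Antitone.measurable fun x y hxy => ENNReal.toReal_mono (measure_ne_top _ _)
    (measure_mono (Ioi_subset_Ioi (ENNReal.ofReal_le_ofReal hxy)))

/-- If moreover `G` is continuously differentiable on `[0,∞)` (i.e. the map
`g : t ↦ G(t)` on `ℝ₊` is `C¹`), then for all finite Borel measures `μ, ν` on `E = [0,∞]`,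
`∫₀^∞ |G(H^μ_r) - G(H^ν_r)| dr ≤ ∫₀^∞ G'(v) |μ((v,∞]) - ν((v,∞])| dv`. -/
theorem lintegral_d_height_le (G : ℝ≥0∞ → ℝ) (hGc : Continuous G) (hGm : StrictMono G)
    (hG0 : G 0 = 0) (hG1 : G ⊤ ≤ 1)
    (g : ℝ → ℝ) (hgG : ∀ t : ℝ, g t = G (ENNReal.ofReal t))
    (hgC1 : ContDiffOn ℝ 1 g (Set.Ici 0))
    (μ ν : Measure ℝ≥0∞) [IsFiniteMeasure μ] [IsFiniteMeasure ν] :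
    (∫⁻ r in Set.Ioi (0:ℝ),
        ENNReal.ofReal |G (Hr μ (ENNReal.ofReal r)) - G (Hr ν (ENNReal.ofReal r))|)
      ≤ ∫⁻ v in Set.Ioi (0:ℝ),
          ENNReal.ofReal (derivWithin g (Set.Ici 0) v *
            |(μ (Set.Ioi (ENNReal.ofReal v))).toReal -
              (ν (Set.Ioi (ENNReal.ofReal v))).toReal|) := by
  set M : ℝ → ℝ := fun v => (μ (Ioi (ENNReal.ofReal v))).toReal with hM
  set N : ℝ → ℝ := fun v => (ν (Ioi (ENNReal.ofReal v))).toReal with hN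
  have hMm : Measurable M := measurable_tail μ
  have hNm : Measurable N := measurable_tail ν
  have hHM : ∀ r : ℝ, 0 < r → ∀ v : ℝ,
      ENNReal.ofReal v < Hr μ (ENNReal.ofReal r) ↔ r < M v := fun r hr v => by
    rw [lt_Hr_iff, ENNReal.ofReal_lt_iff_lt_toReal hr.le (measure_ne_top _ _)]
  have hHN : ∀ r : ℝ, 0 < r → ∀ v : ℝ,
      ENNReal.ofReal v < Hr ν (ENNReal.ofReal r) ↔ r < N v := fun r hr v => by
    rw [lt_Hr_iff, ENNReal.ofReal_lt_iff_lt_toReal hr.le (measure_ne_top _ _)]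
  have hnn : ∀ x, 0 ≤ deriv g x := fun x => Monotone.deriv_nonneg fun x y hxy => by
    rw [hgG, hgG]; exact hGm.monotone (ENNReal.ofReal_le_ofReal hxy)
  -- The pairs `(r, v)` for which `v` lies below exactly one of the two heights.
  set S : Set (ℝ × ℝ) := {p | (N p.2 ≤ p.1 ∧ p.1 < M p.2) ∨ (M p.2 ≤ p.1 ∧ p.1 < N p.2)} with hS
  have hSm : MeasurableSet S := by
    have h1 : Measurable fun p : ℝ × ℝ => M p.2 := hMm.comp measurable_snd
    have h2 : Measurable fun p : ℝ × ℝ => N p.2 := hNm.comp measurable_snd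
    exact ((measurableSet_le h2 measurable_fst).inter (measurableSet_lt measurable_fst h1)).union
      ((measurableSet_le h1 measurable_fst).inter (measurableSet_lt measurable_fst h2))
  set f : ℝ → ℝ → ℝ≥0∞ := fun r v => S.indicator (fun p => ENNReal.ofReal (deriv g p.2)) (r, v)
    with hf
  have hfm : Measurable (Function.uncurry f) :=
    (((measurable_deriv g).comp measurable_snd).ennreal_ofReal).indicator hSm
  have step1 : ∀ r ∈ Ioi (0:ℝ),
      ENNReal.ofReal |G (Hr μ (ENNReal.ofReal r)) - G (Hr ν (ENNReal.ofReal r))| ≤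
        ∫⁻ v in Ioi (0:ℝ), f r v := by
    intro r hr
    have hsm : MeasurableSet {v | (r, v) ∈ S} := measurable_prodMk_left hSm
    have hfr : ∫⁻ v in Ioi (0:ℝ), f r v =
        ∫⁻ v in Ioi (0:ℝ) ∩ {v | (r, v) ∈ S}, ENNReal.ofReal (deriv g v) := by
      rw [inter_comm, ← setLIntegral_indicator hsm]
      rfl
    rw [hfr]
    rcases le_total (Hr μ (ENNReal.ofReal r)) (Hr ν (ENNReal.ofReal r)) with h | h
    · rw [abs_sub_comm, abs_of_nonneg (sub_nonneg.2 (hGm.monotone h))]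
      refine (ofReal_sub_le G hGc hGm g hgG hgC1 _ _ h).trans (lintegral_mono_set ?_)
      rintro v ⟨hv, h1, h2⟩
      exact ⟨hv, Or.inr ⟨not_lt.1 fun h3 => absurd ((hHM r hr v).2 h3) (not_lt.2 h1),
        (hHN r hr v).1 h2⟩⟩
    · rw [abs_of_nonneg (sub_nonneg.2 (hGm.monotone h))]
      refine (ofReal_sub_le G hGc hGm g hgG hgC1 _ _ h).trans (lintegral_mono_set ?_)
      rintro v ⟨hv, h1, h2⟩
      exact ⟨hv, Or.inl ⟨not_lt.1 fun h3 => absurd ((hHN r hr v).2 h3) (not_lt.2 h1),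
        (hHM r hr v).1 h2⟩⟩
  have step2 : ∀ v ∈ Ioi (0:ℝ), ∫⁻ r in Ioi (0:ℝ), f r v ≤
      ENNReal.ofReal (derivWithin g (Set.Ici 0) v * |M v - N v|) := by
    intro v hv
    rw [derivWithin_of_mem_nhds (Ici_mem_nhds hv), ENNReal.ofReal_mul (hnn v)]
    calc ∫⁻ r in Ioi (0:ℝ), f r v ≤ ∫⁻ r, f r v := setLIntegral_le_lintegral _ _
      _ ≤ ∫⁻ r, (Ico (min (M v) (N v)) (max (M v) (N v))).indicator
            (fun _ => ENNReal.ofReal (deriv g v)) r := by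
          refine lintegral_mono fun r => ?_
          by_cases h : (r, v) ∈ S
          · have hr : r ∈ Ico (min (M v) (N v)) (max (M v) (N v)) := by
              rcases h with ⟨h1, h2⟩ | ⟨h1, h2⟩
              · exact ⟨min_le_of_right_le h1, lt_max_of_lt_left h2⟩
              · exact ⟨min_le_of_left_le h1, lt_max_of_lt_right h2⟩
            simp [hf, h, hr]
          · simp [hf, h]
      _ = ENNReal.ofReal (deriv g v) * ENNReal.ofReal |M v - N v| := by
          rw [lintegral_indicator_const measurableSet_Ico, Real.volume_Ico, max_sub_min_eq_abs']
  calc _ ≤ ∫⁻ r in Ioi (0:ℝ), ∫⁻ v in Ioi (0:ℝ), f r v :=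
        setLIntegral_mono' measurableSet_Ioi step1
    _ = ∫⁻ v in Ioi (0:ℝ), ∫⁻ r in Ioi (0:ℝ), f r v := lintegral_lintegral_swap hfm.aemeasurable
    _ ≤ _ := setLIntegral_mono' measurableSet_Ioi step2
end
end

section
/- For every a ≥ 0 and all finite Borel measures μ, ν on E = [0,∞], one has D(k_aμ, k_aν) ≤ D(μ, ν). -/
open MeasureTheory Set Filter Topology ENNReal

noncomputable section

/-- The distance `D(μ,ν) = |⟨μ,1⟩ - ⟨ν,1⟩| + ∫₀^∞ d(H^μ_r, H^ν_r) dr` on finite measures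
on `E = [0,∞]`, where `d(x,y) = |G x - G y|`. -/
def Ddist (G : ℝ≥0∞ → ℝ) (μ ν : Measure ℝ≥0∞) : ℝ≥0∞ :=
  ENNReal.ofReal |(μ Set.univ).toReal - (ν Set.univ).toReal| +
    ∫⁻ r in Set.Ioi (0:ℝ),
      ENNReal.ofReal |G (Hr μ (ENNReal.ofReal r)) - G (Hr ν (ENNReal.ofReal r))|

/-- The measure strictly below the cut does not exceed the remaining mass, so the truncated
subtraction giving the weight of the atom in `eraseMass` is a true difference. -/
lemma measure_Iio_eraseCut_le (ν : Measure ℝ≥0∞) (a : ℝ≥0∞) :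
    ν (Iio (eraseCut ν a)) ≤ ν univ - a := by
  rcases eq_or_ne (eraseCut ν a) 0 with h0 | h0
  · simp [h0]
  obtain ⟨u, hu, hmem, hlim⟩ := exists_seq_strictMono_tendsto' (pos_iff_ne_zero.2 h0)
  have hUnion : Iio (eraseCut ν a) = ⋃ n, Iic (u n) := by
    ext x
    simp only [mem_Iio, mem_iUnion, mem_Iic]
    refine ⟨fun h => ?_, fun ⟨n, hn⟩ => hn.trans_lt (hmem n).2⟩
    obtain ⟨n, hn⟩ := (hlim.eventually (lt_mem_nhds h)).exists
    exact ⟨n, hn.le⟩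
  rw [hUnion, Monotone.measure_iUnion fun _ _ h => Iic_subset_Iic.2 (hu.monotone h)]
  exact iSup_le fun n => (not_le.1 fun h => notMem_of_lt_csInf' (hmem n).2 h).le

lemma eraseMass_Iic (ν : Measure ℝ≥0∞) [IsFiniteMeasure ν] (a s : ℝ≥0∞) :
    eraseMass a ν (Iic s) = min (ν (Iic s)) (ν univ - a) := by
  have hcut := le_measure_Iic_eraseCut ν a
  have hlow := measure_Iio_eraseCut_le ν a
  rw [eraseMass, Measure.add_apply, Measure.restrict_apply measurableSet_Iic,
    Measure.smul_apply, Measure.dirac_apply' _ measurableSet_Iic, smul_eq_mul]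
  rcases le_or_gt (eraseCut ν a) s with h | h
  · have hsub : Iic s ∩ Iio (eraseCut ν a) = Iio (eraseCut ν a) :=
      inter_eq_right.2 fun x hx => (le_of_lt hx).trans h
    rw [min_eq_right (hcut.trans (measure_mono (Iic_subset_Iic.2 h))), hsub,
      indicator_of_mem (mem_Iic.2 h), Pi.one_apply, mul_one, add_tsub_cancel_of_le hlow]
  · have hsub : Iic s ∩ Iio (eraseCut ν a) = Iic s :=
      inter_eq_left.2 fun x hx => lt_of_le_of_lt hx h
    rw [hsub, indicator_of_notMem (by simpa using h), mul_zero, add_zero, min_eq_left]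
    exact (not_le.1 fun h' => notMem_of_lt_csInf' h h').le

lemma eraseMass_univ (ν : Measure ℝ≥0∞) [IsFiniteMeasure ν] (a : ℝ≥0∞) :
    eraseMass a ν univ = ν univ - a := by
  simpa using eraseMass_Iic ν a ⊤

instance (ν : Measure ℝ≥0∞) [IsFiniteMeasure ν] (a : ℝ≥0∞) :
    IsFiniteMeasure (eraseMass a ν) :=
  ⟨by rw [eraseMass_univ]; exact tsub_le_self.trans_lt (measure_lt_top _ _)⟩

/-- The semigroup property of mass erasure. -/
lemma eraseMass_eraseMass (ν : Measure ℝ≥0∞) [IsFiniteMeasure ν] (a r : ℝ≥0∞) :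
    eraseMass r (eraseMass a ν) = eraseMass (a + r) ν := by
  refine Measure.ext_of_Iic _ _ fun s => ?_
  rw [eraseMass_Iic, eraseMass_Iic, eraseMass_Iic, eraseMass_univ, tsub_tsub, min_assoc,
    min_eq_right (tsub_le_tsub_left le_self_add _)]

lemma setLIntegral_Ioi_shift_le {a : ℝ} (ha : 0 ≤ a) (F : ℝ → ℝ≥0∞) :
    ∫⁻ r in Ioi (0:ℝ), F (a + r) ≤ ∫⁻ r in Ioi (0:ℝ), F r := by
  have hpre : (fun r => a + r) ⁻¹' Ioi a = Ioi (0:ℝ) := by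
    ext r
    simp
  rw [← hpre, (measurePreserving_add_left volume a).setLIntegral_comp_preimage_emb
    (measurableEmbedding_addLeft a), hpre]
  exact lintegral_mono_set (Ioi_subset_Ioi ha)

lemma toReal_tsub_ofReal {x : ℝ≥0∞} (hx : x ≠ ⊤) {a : ℝ} (ha : 0 ≤ a) :
    (x - ENNReal.ofReal a).toReal = max (x.toReal - a) 0 := by
  rw [← ENNReal.ofReal_toReal hx, ← ENNReal.ofReal_sub _ ha, ENNReal.toReal_ofReal',
    ENNReal.toReal_ofReal ENNReal.toReal_nonneg]

/-- For every `a ≥ 0` and all finite Borel measures `μ, ν` on `E = [0,∞]`,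
`D(k_a μ, k_a ν) ≤ D(μ, ν)`. -/
theorem Ddist_eraseMass_le (G : ℝ≥0∞ → ℝ) (hGc : Continuous G) (hGm : StrictMono G)
    (hG0 : G 0 = 0) (hG1 : G ⊤ ≤ 1)
    (a : ℝ) (ha : 0 ≤ a)
    (μ ν : Measure ℝ≥0∞) [IsFiniteMeasure μ] [IsFiniteMeasure ν] :
    Ddist G (eraseMass (ENNReal.ofReal a) μ) (eraseMass (ENNReal.ofReal a) ν)
      ≤ Ddist G μ ν := by
  have hcongr : (∫⁻ r in Set.Ioi (0:ℝ),
      ENNReal.ofReal |G (Hr (eraseMass (ENNReal.ofReal a) μ) (ENNReal.ofReal r))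
        - G (Hr (eraseMass (ENNReal.ofReal a) ν) (ENNReal.ofReal r))|)
      = ∫⁻ r in Set.Ioi (0:ℝ), ENNReal.ofReal |G (Hr μ (ENNReal.ofReal (a + r)))
        - G (Hr ν (ENNReal.ofReal (a + r)))| := by
    refine setLIntegral_congr_fun measurableSet_Ioi fun r hr => ?_
    have hr' : 0 ≤ r := le_of_lt hr
    simp only [Hr, eraseMass_eraseMass, ENNReal.ofReal_add ha hr']
  have hmass : |(μ univ - ENNReal.ofReal a).toReal - (ν univ - ENNReal.ofReal a).toReal|
      ≤ |(μ univ).toReal - (ν univ).toReal| := by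
    simp only [toReal_tsub_ofReal (measure_ne_top _ _) ha]
    refine (abs_max_sub_max_le_abs _ _ _).trans (le_of_eq ?_)
    congr 1
    ring
  unfold Ddist
  rw [hcongr, eraseMass_univ, eraseMass_univ]
  exact add_le_add (ENNReal.ofReal_le_ofReal hmass)
    (setLIntegral_Ioi_shift_le ha
      fun r => ENNReal.ofReal |G (Hr μ (ENNReal.ofReal r)) - G (Hr ν (ENNReal.ofReal r))|)
end
end

section
/- Let ψ : [0,∞) → [0,∞) be convex, non-decreasing, continuously differentiable, with ψ(0) = 0, and let γ > 0 with ψ(γ) > 0. Let f : [0,∞) → [0,∞) be bounded, continuously differentiable with bounded derivative. Define q(b) = (ψ(b) − ψ(γ))/(b − γ) for b ≠ γ and q(γ) = ψ'(γ), and g(a,y) = ∫₀^a q(f(x+y)) dx for a, y ≥ 0. Then for every y ≥ 0, ∫₀^∞ (ψ(γ) − ψ(f(a+y)) + f'(a+y)) e^{−g(a,y)} da = γ − f(y). -/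
open MeasureTheory Set Filter intervalIntegral

/-!
The integrand has an explicit primitive: since
`(b - γ) q(b) = ψ(b) - ψ(γ)`, the function `F(a) = (f(a+y) - γ) e^{-g(a,y)}` satisfies
`F'(a) = (ψ(γ) - ψ(f(a+y)) + f'(a+y)) e^{-g(a,y)}`, and `F(0) = f(y) - γ`. Convexity makes the
slopes of `ψ` at `γ` non-decreasing, so `q ≥ q(0) = ψ(γ)/γ > 0` on `[0,∞)`. Hence
`e^{-g(a,y)} ≤ e^{-(ψ(γ)/γ) a}`, which makes `F'` integrable (its other factor is bounded) and
sends `F` to `0` at infinity; the fundamental theorem of calculus on `(0,∞)` concludes.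
-/

/-- The divided difference of a convex `ψ` with `ψ 0 = 0` is smallest at `0`, where it equals
`ψ γ / γ`. -/
lemma div_le_dslope_of_convexOn {ψ : ℝ → ℝ} (hconv : ConvexOn ℝ (Set.Ici 0) ψ) (hψ0 : ψ 0 = 0)
    {γ : ℝ} (hγ : 0 < γ) (hd : DifferentiableAt ℝ ψ γ) {b : ℝ} (hb : 0 ≤ b) :
    ψ γ / γ ≤ dslope ψ γ b := by
  rcases eq_or_ne b γ with rfl | hne
  · rw [dslope_same]
    have h := hconv.slope_le_of_hasDerivAt (x := 0) (y := b) (mem_Ici.2 le_rfl) (mem_Ici.2 hb) hγ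
      hd.hasDerivAt
    simpa [slope_def_field, hψ0] using h
  · rw [dslope_of_ne _ hne, slope_def_field]
    have h := hconv.secant_mono (a := γ) (x := 0) (y := b) (mem_Ici.2 hγ.le) (mem_Ici.2 le_rfl)
      (mem_Ici.2 hb) hγ.ne hne hb
    simpa [hψ0, neg_div_neg_eq] using h

theorem lambda_integral_eq
    (ψ : ℝ → ℝ) (hconv : ConvexOn ℝ (Set.Ici 0) ψ) (hmono : MonotoneOn ψ (Set.Ici 0))
    (hψC1 : ContDiffOn ℝ 1 ψ (Set.Ici 0)) (hψ0 : ψ 0 = 0)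
    (γ : ℝ) (hγ : 0 < γ) (hψγ : 0 < ψ γ)
    (f : ℝ → ℝ) (hf0 : ∀ x : ℝ, 0 ≤ x → 0 ≤ f x)
    (hfbdd : ∃ M, ∀ x : ℝ, 0 ≤ x → f x ≤ M)
    (hfC1 : ContDiffOn ℝ 1 f (Set.Ici 0))
    (hf'bdd : ∃ M, ∀ x : ℝ, 0 ≤ x → |derivWithin f (Set.Ici 0) x| ≤ M)
    (q : ℝ → ℝ)
    (hq : ∀ b : ℝ, 0 ≤ b → b ≠ γ → q b = (ψ b - ψ γ) / (b - γ))
    (hqγ : q γ = derivWithin ψ (Set.Ici 0) γ)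
    (g : ℝ → ℝ → ℝ)
    (hg : ∀ a y : ℝ, g a y = ∫ x in (0:ℝ)..a, q (f (x + y)))
    (y : ℝ) (hy : 0 ≤ y) :
    ∫ a in Set.Ioi (0:ℝ),
        (ψ γ - ψ (f (a + y)) + derivWithin f (Set.Ici 0) (a + y)) * Real.exp (-(g a y))
      = γ - f y := by
  obtain ⟨M, hM⟩ := hfbdd
  obtain ⟨M', hM'⟩ := hf'bdd
  have hnhds : Set.Ici (0:ℝ) ∈ nhds γ := Ici_mem_nhds hγ
  have hψd : DifferentiableAt ℝ ψ γ :=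
    ((hψC1.differentiableOn one_ne_zero) γ hγ.le).differentiableAt hnhds
  have hqd : ∀ b, 0 ≤ b → q b = dslope ψ γ b := by
    intro b hb
    rcases eq_or_ne b γ with rfl | hne
    · rw [hqγ, dslope_same, derivWithin_of_mem_nhds hnhds]
    · rw [hq b hb hne, dslope_of_ne _ hne, slope_def_field]
  have hdc : ContinuousOn (dslope ψ γ) (Set.Ici 0) :=
    (continuousOn_dslope hnhds).2 ⟨hψC1.continuousOn, hψd⟩
  have hc : 0 < ψ γ / γ := div_pos hψγ hγ
  set c := ψ γ / γ with hc_def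
  -- Extending the integrand of `g` by a constant to the left of `0` makes it continuous on `ℝ`.
  let h : ℝ → ℝ := fun x => dslope ψ γ (f (max x 0 + y))
  have hpos : ∀ x : ℝ, 0 ≤ max x 0 + y := fun x => add_nonneg (le_max_right _ _) hy
  have hh : Continuous h := by
    have h1 : Continuous fun x : ℝ => f (max x 0 + y) :=
      hfC1.continuousOn.comp_continuous (by fun_prop) hpos
    exact hdc.comp_continuous h1 fun x => hf0 _ (hpos x)
  let G : ℝ → ℝ := fun a => ∫ x in (0:ℝ)..a, h x
  have hG : ∀ a, HasDerivAt G (h a) a := fun a =>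
    integral_hasDerivAt_right (hh.intervalIntegrable _ _)
      (hh.stronglyMeasurableAtFilter _ _) hh.continuousAt
  have hGc : Continuous G := continuous_iff_continuousAt.2 fun a => (hG a).continuousAt
  have hgG : ∀ a, 0 ≤ a → g a y = G a := by
    intro a ha
    rw [hg]
    refine integral_congr fun x hx => ?_
    rw [uIcc_of_le ha] at hx
    simp only [h, max_eq_left hx.1]
    exact hqd _ (hf0 _ (add_nonneg hx.1 hy))
  have hGlb : ∀ a, 0 ≤ a → c * a ≤ G a := by
    intro a ha
    have := integral_mono_on ha (intervalIntegrable_const (c := c) (μ := volume))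
      (hh.intervalIntegrable 0 a)
      (fun x _ => div_le_dslope_of_convexOn hconv hψ0 hγ hψd (hf0 _ (hpos x)))
    simpa [mul_comm] using this
  have hexp : ∀ a, 0 ≤ a → Real.exp (-G a) ≤ Real.exp (-c * a) := fun a ha =>
    Real.exp_le_exp.2 (by linarith [hGlb a ha])
  let F : ℝ → ℝ := fun a => (f (a + y) - γ) * Real.exp (-G a)
  let F' : ℝ → ℝ := fun a =>
    (ψ γ - ψ (f (a + y)) + derivWithin f (Set.Ici 0) (a + y)) * Real.exp (-G a)
  have hmaps : MapsTo (fun a : ℝ => a + y) (Set.Ici 0) (Set.Ici 0) :=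
    fun a ha => add_nonneg ha hy
  have hfc : ContinuousOn (fun a => f (a + y)) (Set.Ici 0) :=
    hfC1.continuousOn.comp (by fun_prop) hmaps
  have hEc : Continuous fun a => Real.exp (-G a) := by fun_prop
  have hFc : ContinuousOn F (Set.Ici 0) := (hfc.sub continuousOn_const).mul hEc.continuousOn
  have hF'c : ContinuousOn F' (Set.Ici 0) := by
    refine ((continuousOn_const.sub (hψC1.continuousOn.comp hfc fun a ha => ?_)).add
      ((hfC1.continuousOn_derivWithin (uniqueDiffOn_Ici 0) le_rfl).comp (by fun_prop) hmaps)).mul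
      hEc.continuousOn
    exact hf0 _ (hmaps ha)
  have hderiv : ∀ a ∈ Set.Ioi (0:ℝ), HasDerivAt F (F' a) a := by
    intro a ha
    have ha0 : (0:ℝ) < a := ha
    have hay : 0 < a + y := by linarith
    have h1 : HasDerivAt f (derivWithin f (Set.Ici 0) (a + y)) (a + y) :=
      ((hfC1.differentiableOn one_ne_zero) _ hay.le).hasDerivWithinAt.hasDerivAt
        (Ici_mem_nhds hay)
    have h2 := ((h1.comp_add_const a y).sub_const γ).mul (hG a).neg.exp
    refine h2.congr_deriv ?_
    have h3 : (f (a + y) - γ) * h a = ψ (f (a + y)) - ψ γ := by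
      simpa [h, max_eq_left ha0.le] using sub_smul_dslope ψ γ (f (a + y))
    simp only [F']
    linear_combination (-Real.exp (-G a)) * h3
  have hM0 : 0 ≤ M := (hf0 0 le_rfl).trans (hM 0 le_rfl)
  have hint : IntegrableOn F' (Set.Ioi 0) := by
    refine Integrable.mono' ((integrableOn_exp_mul_Ioi (neg_lt_zero.2 hc) 0).const_mul
      (ψ γ + ψ M + M'))
      ((hF'c.mono Ioi_subset_Ici_self).aestronglyMeasurable measurableSet_Ioi) ?_
    refine (ae_restrict_iff' measurableSet_Ioi).2 (Eventually.of_forall fun a ha => ?_)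
    have ha0 : (0:ℝ) ≤ a := le_of_lt ha
    have hay : 0 ≤ a + y := add_nonneg ha0 hy
    have hub : ψ (f (a + y)) ≤ ψ M := hmono (hf0 _ hay) hM0 (hM _ hay)
    have hlb : 0 ≤ ψ (f (a + y)) := hψ0 ▸ hmono (mem_Ici.2 le_rfl) (hf0 _ hay) (hf0 _ hay)
    have hd := abs_le.1 (hM' _ hay)
    rw [Real.norm_eq_abs, abs_mul, Real.abs_exp]
    refine mul_le_mul (abs_le.2 ⟨?_, ?_⟩) (hexp a ha0) (Real.exp_pos _).le ?_ <;> linarith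
  have htend : Tendsto F atTop (nhds 0) := by
    have h0 : Tendsto (fun a : ℝ => (M + γ) * Real.exp (-c * a)) atTop (nhds 0) := by
      have : Tendsto (fun a : ℝ => -c * a) atTop atBot :=
        tendsto_id.const_mul_atTop_of_neg (neg_lt_zero.2 hc)
      simpa using (Real.tendsto_exp_atBot.comp this).const_mul (M + γ)
    refine squeeze_zero_norm' ?_ h0
    filter_upwards [eventually_ge_atTop (0:ℝ)] with a ha
    have hay : 0 ≤ a + y := add_nonneg ha hy
    have h1 := hf0 _ hay
    have h2 := hM _ hay
    simp only [F]
    rw [Real.norm_eq_abs, abs_mul, Real.abs_exp]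
    refine mul_le_mul (abs_le.2 ⟨?_, ?_⟩) (hexp a ha) (Real.exp_pos _).le ?_ <;> linarith
  have hmain := integral_Ioi_of_hasDerivAt_of_tendsto (hFc 0 (mem_Ici.2 le_rfl)) hderiv hint htend
  rw [setIntegral_congr_fun measurableSet_Ioi (g := F') fun a ha => by
    simp only [F', hgG a (le_of_lt ha)], hmain]
  simp [F, G]
end
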